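/- For every integer n ≥ 2, the symmetrized polydisc 𝔾ₙ is not Gromov hyperbolic with respect to its Carathéodory distance c_{𝔾ₙ}, and it is not Gromov hyperbolic with respect to its Kobayashi distance k_{𝔾ₙ}. -/

import Mathlib

open Metric Set

noncomputable section

/-- Inverse hyperbolic tangent: `artanh t = (1/2) * log ((1+t)/(1-t))`. -/
def artanh (x : ℝ) : ℝ := Real.log ((1 + x) / (1 - x)) / 2

variable {E : Type*} [NormedAddCommGroup E] [NormedSpace ℂ E]

/-- The Lempert function of a set `D ⊆ E`:
`l_D(z,w) = inf { artanh |α| : ∃ φ : 𝔻 → D holomorphic, φ 0 = z, φ α = w }`. -/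
def lempert (D : Set E) (z w : E) : ℝ :=
  sInf { r : ℝ | ∃ α : ℂ, ‖α‖ < 1 ∧
    (∃ φ : ℂ → E, DifferentiableOn ℂ φ (ball 0 1) ∧ MapsTo φ (ball 0 1) D ∧
      φ 0 = z ∧ φ α = w) ∧ r = artanh ‖α‖ }

/-- The Kobayashi pseudodistance: infimum of `∑ l_D(z_{i-1}, z_i)` over all finite
chains of points `z = c 0, c 1, …, c m = w` in `D`. -/
def kobayashi (D : Set E) (z w : E) : ℝ :=
  sInf { r : ℝ | ∃ (m : ℕ) (c : ℕ → E), c 0 = z ∧ c m = w ∧ (∀ i ≤ m, c i ∈ D) ∧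
    r = ∑ i ∈ Finset.range m, lempert D (c i) (c (i + 1)) }

/-- The Carathéodory pseudodistance:
`c_D(z,w) = sup { artanh |f w| : f : D → 𝔻 holomorphic, f z = 0 }`. -/
def caratheodory (D : Set E) (z w : E) : ℝ :=
  sSup { r : ℝ | ∃ f : E → ℂ, DifferentiableOn ℂ f D ∧ MapsTo f D (ball 0 1) ∧
    f z = 0 ∧ r = artanh ‖f w‖ }

/-- `(D, d)` is Gromov hyperbolic if
`sup_{p,q,x,w ∈ D} ( min{(p,x)_w, (x,q)_w} − (p,q)_w ) < ∞`, where
`(x,y)_z = d x z + d z y - d x y` is the Gromov product. -/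
def GromovHyperbolicWith (D : Set E) (d : E → E → ℝ) : Prop :=
  ∃ C : ℝ, ∀ p ∈ D, ∀ q ∈ D, ∀ x ∈ D, ∀ w ∈ D,
    min (d p w + d w x - d p x) (d x w + d w q - d x q) - (d p w + d w q - d p q) ≤ C

end

/-- The symmetrized polydisc `𝔾ₙ ⊆ ℂⁿ`: the image of the unit polydisc `𝔻ⁿ` under the
map whose `k`-th component is the `k`-th elementary symmetric polynomial. -/
def symmetrizedPolydisc (n : ℕ) : Set (EuclideanSpace ℂ (Fin n)) :=
  { w | ∃ z : Fin n → ℂ, (∀ j, ‖z j‖ < 1) ∧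
      ∀ k : Fin n, w k = ∑ s ∈ Finset.univ.powersetCard ((k : ℕ) + 1), ∏ j ∈ s, z j }


/-!
Put `q s = π (tanh s₁, …, tanh sₙ)` for `s ∈ ℝⁿ`. Since the Möbius distance of `tanh a` and `tanh b`
is `|tanh (a - b)|`, the map `q` is `1`-Lipschitz from the sup norm to the Lempert function of `𝔾ₙ`.
Conversely, for `u = ±1` the function `π(z) ↦ ∑ⱼ (u + zⱼ) / (u - zⱼ)` is holomorphic on `𝔾ₙ` with
positive real part, and it equals `∑ⱼ exp (2 u sⱼ)` at `q s`; so the Carathéodory distance from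
`q s` to `q t` is at least `|max s - max t|` and `|min s - min t|`, up to the additive error
`log n / 2`. Thus every `d` between the Carathéodory distance and the Lempert function makes the
half-plane `min ≤ max` of the `ℓ^∞`-plane with coordinates `(max, min)` almost isometrically
embedded in `𝔾ₙ`, and that half-plane contains arbitrarily large squares.
-/

section InverseHyperbolicTangent

lemma artanh_eq_real_artanh {x : ℝ} (hx : x ∈ Icc (-1) 1) : artanh x = Real.artanh x := by
  rw [artanh, Real.artanh_eq_half_log hx]
  ring

lemma artanh_nonneg {x : ℝ} (h₀ : 0 ≤ x) (h₁ : x ≤ 1) : 0 ≤ artanh x := by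
  rw [artanh_eq_real_artanh ⟨by linarith, h₁⟩]
  exact Real.artanh_nonneg h₀

lemma artanh_le_artanh {x y : ℝ} (hx : -1 < x) (hy : y < 1) (hxy : x ≤ y) :
    artanh x ≤ artanh y := by
  rw [artanh_eq_real_artanh ⟨hx.le, by linarith⟩, artanh_eq_real_artanh ⟨by linarith, hy.le⟩]
  exact Real.artanh_le_artanh hx hy hxy

lemma artanh_tanh (x : ℝ) : artanh (Real.tanh x) = x := by
  rw [artanh_eq_real_artanh ⟨(Real.neg_one_lt_tanh x).le, (Real.tanh_lt_one x).le⟩,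
    Real.artanh_tanh]

lemma tanh_le_tanh_iff {x y : ℝ} : Real.tanh x ≤ Real.tanh y ↔ x ≤ y := by
  rw [← Real.artanh_le_artanh_iff ⟨Real.neg_one_lt_tanh x, Real.tanh_lt_one x⟩
    ⟨Real.neg_one_lt_tanh y, Real.tanh_lt_one y⟩, Real.artanh_tanh, Real.artanh_tanh]

lemma abs_tanh_le_tanh_of_abs_le {x y : ℝ} (h : |x| ≤ y) : |Real.tanh x| ≤ Real.tanh y := by
  rw [abs_le, ← Real.tanh_neg, tanh_le_tanh_iff, tanh_le_tanh_iff]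
  exact abs_le.mp h

lemma tanh_sub (x y : ℝ) :
    Real.tanh (x - y) = (Real.tanh x - Real.tanh y) / (1 - Real.tanh x * Real.tanh y) := by
  have hx := (Real.cosh_pos x).ne'
  have hy := (Real.cosh_pos y).ne'
  rw [Real.tanh_eq_sinh_div_cosh, Real.tanh_eq_sinh_div_cosh, Real.tanh_eq_sinh_div_cosh,
    Real.sinh_sub, Real.cosh_sub, div_sub_div _ _ hx hy, div_mul_div_comm,
    one_sub_div (mul_ne_zero hx hy), div_div_div_cancel_right₀ (mul_ne_zero hx hy)]

lemma one_add_tanh_div_one_sub_tanh (x : ℝ) :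
    (1 + Real.tanh x) / (1 - Real.tanh x) = Real.exp (2 * x) := by
  have hc := (Real.cosh_pos x).ne'
  rw [Real.tanh_eq_sinh_div_cosh, one_add_div hc, one_sub_div hc, div_div_div_cancel_right₀ hc,
    Real.cosh_add_sinh, Real.cosh_sub_sinh, ← Real.exp_sub]
  congr 1
  ring

lemma norm_ofReal_tanh_lt_one {ι : Type*} [Fintype ι] (s : ι → ℝ) :
    ‖fun j => (Real.tanh (s j) : ℂ)‖ < 1 :=
  (pi_norm_lt_iff one_pos).mpr fun j => by
    rw [Complex.norm_real]
    exact Real.abs_tanh_lt_one (s j)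

end InverseHyperbolicTangent

section FiniteFamilies

variable {ι : Type*} [Fintype ι]

lemma log_sum_exp_le_add_log_card [Nonempty ι] {x : ι → ℝ} {M : ℝ} (h : ∀ j, x j ≤ M) :
    Real.log (∑ j, Real.exp (x j)) ≤ M + Real.log (Fintype.card ι) := by
  have hcard : (Fintype.card ι : ℝ) ≠ 0 := Nat.cast_ne_zero.mpr Fintype.card_ne_zero
  have hsum : ∑ j, Real.exp (x j) ≤ Fintype.card ι * Real.exp M := by
    simpa using Finset.sum_le_card_nsmul Finset.univ _ _ fun j _ => Real.exp_le_exp.mpr (h j)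
  have hpos : 0 < ∑ j, Real.exp (x j) :=
    Finset.sum_pos (fun j _ => Real.exp_pos (x j)) Finset.univ_nonempty
  calc Real.log (∑ j, Real.exp (x j)) ≤ Real.log (Fintype.card ι * Real.exp M) :=
        Real.log_le_log hpos hsum
    _ = M + Real.log (Fintype.card ι) := by
        rw [Real.log_mul hcard (Real.exp_ne_zero M), Real.log_exp, add_comm]

lemma le_log_sum_exp (x : ι → ℝ) (i : ι) : x i ≤ Real.log (∑ j, Real.exp (x j)) := by
  rw [Real.le_log_iff_exp_le
    (Finset.sum_pos (fun j _ => Real.exp_pos (x j)) ⟨i, Finset.mem_univ i⟩)]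
  exact Finset.single_le_sum (fun j _ => (Real.exp_pos (x j)).le) (Finset.mem_univ i)

lemma dist_update_const_le [DecidableEq ι] {X : Type*} [PseudoMetricSpace X] {i : ι}
    {a b a' b' : X} {r : ℝ} (ha : dist a a' ≤ r) (hb : dist b b' ≤ r) :
    dist (Function.update (fun _ => b) i a) (Function.update (fun _ => b') i a') ≤ r := by
  refine (dist_pi_le_iff (dist_nonneg.trans ha)).mpr fun k => ?_
  rcases eq_or_ne k i with rfl | hk
  · simpa using ha
  · simpa [hk] using hb

end FiniteFamilies

lemma differentiableOn_div {E : Type*} [NormedAddCommGroup E] [NormedSpace ℂ E] {D : Set E}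
    {f g : E → ℂ} (hf : DifferentiableOn ℂ f D) (hg : DifferentiableOn ℂ g D)
    (hne : ∀ x ∈ D, g x ≠ 0) : DifferentiableOn ℂ (fun x => f x / g x) D := by
  simp only [div_eq_mul_inv]
  exact hf.fun_mul (hg.fun_inv hne)

lemma norm_intCast_unit (u : ℤˣ) : ‖((u : ℤ) : ℂ)‖ = 1 := by
  rcases Int.units_eq_one_or u with rfl | rfl <;> simp

section HalfPlane

open scoped ComplexConjugate UpperHalfPlane

lemma sub_ne_zero_of_norm_lt {u ζ : ℂ} (h : ‖ζ‖ < ‖u‖) : u - ζ ≠ 0 :=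
  sub_ne_zero.mpr fun huζ => (huζ ▸ h).false

lemma re_herglotzRieszKernel_pos {u ζ : ℂ} (h : ‖ζ‖ < ‖u‖) :
    0 < (herglotzRieszKernel 0 ζ u).re := by
  refine lt_of_lt_of_le ?_ (le_re_herglotzRieszKernel (R := ‖u‖) (by simp) (by simpa using h))
  have := norm_nonneg ζ
  rw [sub_zero]
  exact div_pos (by linarith) (by linarith)

/-- The Cayley transform `ζ ↦ i (1 + ζ) / (1 - ζ)` of the unit disc onto the upper half plane. -/
noncomputable def cayley (ζ : ℂ) : ℂ := Complex.I * herglotzRieszKernel 0 ζ 1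

lemma im_cayley_pos {ζ : ℂ} (h : ‖ζ‖ < 1) : 0 < (cayley ζ).im := by
  rw [cayley, Complex.I_mul_im]
  exact re_herglotzRieszKernel_pos (by simpa using h)

lemma differentiableOn_cayley : DifferentiableOn ℂ cayley (ball 0 1) := by
  unfold cayley herglotzRieszKernel
  refine (differentiableOn_div (by fun_prop) (by fun_prop) fun ζ hζ => ?_).const_mul _
  simpa using sub_ne_zero_of_norm_lt (u := 1) (by simpa using hζ)

lemma norm_sub_div_sub_conj (a b : ℍ) :
    ‖((b : ℂ) - a) / (b - conj (a : ℂ))‖ = Real.tanh (dist a b / 2) := by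
  rw [dist_comm a b, UpperHalfPlane.tanh_half_dist, norm_div, dist_eq_norm, dist_eq_norm]

lemma tanh_half_dist_cayley {ζ : ℂ} (h : ‖ζ‖ < 1) :
    Real.tanh (dist (⟨cayley 0, im_cayley_pos (by simp)⟩ : ℍ) ⟨cayley ζ, im_cayley_pos h⟩ / 2) =
      ‖ζ‖ := by
  have hζ : 1 - ζ ≠ 0 := sub_ne_zero_of_norm_lt (by simpa using h)
  have hzero : cayley 0 = Complex.I := by simp [cayley, herglotzRieszKernel]
  have hcayley : cayley ζ = Complex.I * ((1 + ζ) / (1 - ζ)) := by simp [cayley, herglotzRieszKernel]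
  have hsub : cayley ζ - Complex.I = 2 * Complex.I * ζ / (1 - ζ) := by
    rw [hcayley]; field_simp; ring
  have hadd : cayley ζ - conj Complex.I = 2 * Complex.I / (1 - ζ) := by
    rw [hcayley, Complex.conj_I]; field_simp; ring
  rw [← norm_sub_div_sub_conj]
  dsimp only
  rw [hzero, hsub, hadd, div_div_div_cancel_right₀ hζ, mul_div_cancel_left₀ _ (by simp)]

end HalfPlane

section Mobius

open scoped ComplexConjugate

/-- The automorphism `ζ ↦ (ζ + a) / (1 + ā ζ)` of the unit disc, which maps `0` to `a`. -/
noncomputable def mobius (a ζ : ℂ) : ℂ := (ζ + a) / (1 + conj a * ζ)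

variable {a ζ : ℂ}

lemma one_add_conj_mul_ne_zero (ha : ‖a‖ < 1) (hζ : ‖ζ‖ < 1) : 1 + conj a * ζ ≠ 0 := by
  have h : ‖-(conj a * ζ)‖ < ‖(1 : ℂ)‖ := by
    rw [norm_neg, norm_mul, Complex.norm_conj, norm_one]
    exact mul_lt_one_of_nonneg_of_lt_one_left (norm_nonneg a) ha hζ.le
  simpa using sub_ne_zero_of_norm_lt h

lemma sq_norm_one_add_conj_mul_sub_sq_norm_add (a ζ : ℂ) :
    ‖1 + conj a * ζ‖ ^ 2 - ‖ζ + a‖ ^ 2 = (1 - ‖a‖ ^ 2) * (1 - ‖ζ‖ ^ 2) := by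
  simp only [Complex.sq_norm, Complex.normSq_apply, Complex.add_re, Complex.add_im, Complex.mul_re,
    Complex.mul_im, Complex.one_re, Complex.one_im, Complex.conj_re, Complex.conj_im]
  ring

lemma norm_mobius_lt_one (ha : ‖a‖ < 1) (hζ : ‖ζ‖ < 1) : ‖mobius a ζ‖ < 1 := by
  rw [mobius, norm_div, div_lt_one (norm_pos_iff.mpr (one_add_conj_mul_ne_zero ha hζ)),
    ← sq_lt_sq₀ (norm_nonneg _) (norm_nonneg _), ← sub_pos,
    sq_norm_one_add_conj_mul_sub_sq_norm_add]
  have ha2 : ‖a‖ ^ 2 < 1 := pow_lt_one₀ (norm_nonneg a) ha two_ne_zero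
  have hζ2 : ‖ζ‖ ^ 2 < 1 := pow_lt_one₀ (norm_nonneg ζ) hζ two_ne_zero
  exact mul_pos (sub_pos.mpr ha2) (sub_pos.mpr hζ2)

lemma differentiableOn_mobius (ha : ‖a‖ < 1) : DifferentiableOn ℂ (mobius a) (ball 0 1) :=
  differentiableOn_div (by fun_prop) (by fun_prop) fun _ hζ =>
    one_add_conj_mul_ne_zero ha (mem_ball_zero_iff.mp hζ)

lemma mobius_zero (a : ℂ) : mobius a 0 = a := by simp [mobius]

lemma mobius_mobius_neg (ha : ‖a‖ < 1) (hζ : ‖ζ‖ < 1) : mobius a (mobius (-a) ζ) = ζ := by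
  have ha' : ‖-a‖ < 1 := by rwa [norm_neg]
  have hinner := one_add_conj_mul_ne_zero ha' hζ
  have houter := one_add_conj_mul_ne_zero ha (norm_mobius_lt_one ha' hζ)
  have hmul : mobius (-a) ζ * (1 + conj (-a) * ζ) = ζ + -a := div_mul_cancel₀ _ hinner
  rw [map_neg] at hmul
  rw [mobius, div_eq_iff houter]
  linear_combination hmul

lemma mobius_neg_tanh (x y : ℝ) :
    mobius (-(Real.tanh x : ℂ)) (Real.tanh y) = (Real.tanh (y - x) : ℝ) := by
  rw [mobius, tanh_sub, map_neg, Complex.conj_ofReal]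
  push_cast
  ring

end Mobius

section AnalyticDiscs

variable {E F ι : Type*} [NormedAddCommGroup E] [NormedSpace ℂ E] [NormedAddCommGroup F]
  [NormedSpace ℂ F] [Fintype ι] {D : Set E} {D' : Set F} {α : ℂ} {z w : E}

/-- Some analytic disc in `D` takes the parameters `0` and `α` to `z` and `w`: the condition on `α`
in the definition of `lempert D z w`, apart from `‖α‖ < 1`. -/
def JoinedByDisc (D : Set E) (α : ℂ) (z w : E) : Prop :=
  ∃ φ : ℂ → E, DifferentiableOn ℂ φ (ball 0 1) ∧ MapsTo φ (ball 0 1) D ∧ φ 0 = z ∧ φ α = w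

/-- Any two points of `D` lie on a common analytic disc in `D`, so that no Lempert infimum over `D`
is taken over the empty set, where it would be `0`. -/
def DiscConnected (D : Set E) : Prop :=
  ∀ z ∈ D, ∀ w ∈ D, ∃ α : ℂ, ‖α‖ < 1 ∧ JoinedByDisc D α z w

lemma JoinedByDisc.map (h : JoinedByDisc D α z w) {f : E → F} (hf : DifferentiableOn ℂ f D)
    (hfD : MapsTo f D D') : JoinedByDisc D' α (f z) (f w) := by
  obtain ⟨φ, hφ, hφD, rfl, rfl⟩ := h
  exact ⟨f ∘ φ, hf.comp hφ hφD, hfD.comp hφD, rfl, rfl⟩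

lemma DiscConnected.image (h : DiscConnected D) {f : E → F} (hf : DifferentiableOn ℂ f D) :
    DiscConnected (f '' D) := by
  rintro _ ⟨z, hz, rfl⟩ _ ⟨w, hw, rfl⟩
  obtain ⟨α, hα, hzw⟩ := h z hz w hw
  exact ⟨α, hα, hzw.map hf (mapsTo_image f D)⟩

lemma norm_mobius_neg_pi_lt_one {z w : ι → ℂ} (hz : ‖z‖ < 1) (hw : ‖w‖ < 1) :
    ‖fun j => mobius (-z j) (w j)‖ < 1 :=
  (pi_norm_lt_iff one_pos).mpr fun j => norm_mobius_lt_one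
    (by rw [norm_neg]; exact (norm_le_pi_norm z j).trans_lt hz) ((norm_le_pi_norm w j).trans_lt hw)

/- The disc is `mobius (z j)` applied to `ζ ↦ ζ mⱼ / max |m|` in the `j`-th coordinate, where
`mⱼ = mobius (-z j) (w j)`; if the maximum is `0`, then the junk value `mⱼ / 0 = 0` still equals
`mⱼ`. -/
lemma joinedByDisc_polydisc {z w : ι → ℂ} (hz : ‖z‖ < 1) (hw : ‖w‖ < 1) :
    JoinedByDisc (ball 0 1) (‖fun j => mobius (-z j) (w j)‖ : ℝ) z w := by
  set m : ι → ℂ := fun j => mobius (-z j) (w j)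
  have hzj : ∀ j, ‖z j‖ < 1 := fun j => (norm_le_pi_norm z j).trans_lt hz
  have hwj : ∀ j, ‖w j‖ < 1 := fun j => (norm_le_pi_norm w j).trans_lt hw
  have hslope : ∀ j, ‖m j / (‖m‖ : ℂ)‖ ≤ 1 := fun j => by
    rw [norm_div, Complex.norm_real, norm_norm]
    exact div_le_one_of_le₀ (norm_le_pi_norm m j) (norm_nonneg m)
  have hscale : ∀ j, ∀ ζ ∈ ball (0 : ℂ) 1, ‖ζ * (m j / (‖m‖ : ℂ))‖ < 1 := fun j ζ hζ => by
    rw [norm_mul]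
    exact mul_lt_one_of_nonneg_of_lt_one_left (norm_nonneg ζ) (mem_ball_zero_iff.mp hζ) (hslope j)
  refine ⟨fun ζ j => mobius (z j) (ζ * (m j / (‖m‖ : ℂ))), ?_, fun ζ hζ => ?_, ?_, ?_⟩
  · refine differentiableOn_pi.mpr fun j => (differentiableOn_mobius (hzj j)).comp
      (f := fun ζ => ζ * (m j / (‖m‖ : ℂ))) (by fun_prop) fun ζ hζ => ?_
    exact mem_ball_zero_iff.mpr (hscale j ζ hζ)
  · rw [mem_ball_zero_iff, pi_norm_lt_iff one_pos]
    exact fun j => norm_mobius_lt_one (hzj j) (hscale j ζ hζ)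
  · simp only [zero_mul, mobius_zero]
  · funext j
    have hm : (‖m‖ : ℂ) = 0 → m j = 0 := fun h => by
      rw [norm_eq_zero.mp (Complex.ofReal_eq_zero.mp h), Pi.zero_apply]
    dsimp only
    rw [mul_div_cancel_of_imp' hm]
    exact mobius_mobius_neg (hzj j) (hwj j)

lemma discConnected_polydisc : DiscConnected (ball (0 : ι → ℂ) 1) := fun z hz w hw => by
  rw [mem_ball_zero_iff] at hz hw
  refine ⟨_, ?_, joinedByDisc_polydisc hz hw⟩
  rw [Complex.norm_real, norm_norm]
  exact norm_mobius_neg_pi_lt_one hz hw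

end AnalyticDiscs

section InvariantFunctions

open scoped ComplexConjugate UpperHalfPlane

variable {E : Type*} [NormedAddCommGroup E] [NormedSpace ℂ E] {D : Set E} {α : ℂ} {x z w : E}

lemma artanh_norm_le_of_joinedByDisc (h : JoinedByDisc D α z w) (hα : ‖α‖ < 1) {f : E → ℂ}
    (hf : DifferentiableOn ℂ f D) (hfD : MapsTo f D (ball 0 1)) (hfz : f z = 0) :
    artanh ‖f w‖ ≤ artanh ‖α‖ := by
  obtain ⟨φ, hφ, hφD, rfl, rfl⟩ := h
  refine artanh_le_artanh (by linarith [norm_nonneg (f (φ α))]) hα ?_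
  exact Complex.norm_le_norm_of_mapsTo_ball (f := f ∘ φ) (hf.comp hφ hφD)
    ((hfD.comp hφD).mono_right ball_subset_closedBall) hfz hα

lemma lempert_nonneg (D : Set E) (z w : E) : 0 ≤ lempert D z w := by
  refine Real.sInf_nonneg ?_
  rintro _ ⟨α, hα, -, rfl⟩
  exact artanh_nonneg (norm_nonneg α) hα.le

lemma lempert_le_of_joinedByDisc (h : JoinedByDisc D α z w) (hα : ‖α‖ < 1) :
    lempert D z w ≤ artanh ‖α‖ := by
  refine csInf_le ⟨0, ?_⟩ ⟨α, hα, h, rfl⟩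
  rintro _ ⟨β, hβ, -, rfl⟩
  exact artanh_nonneg (norm_nonneg β) hβ.le

lemma kobayashi_le_lempert (hz : z ∈ D) (hw : w ∈ D) : kobayashi D z w ≤ lempert D z w := by
  refine csInf_le ⟨0, ?_⟩ ⟨1, fun i => if i = 0 then z else w, by simp, by simp, fun i _ => ?_,
    by simp⟩
  · rintro _ ⟨m, c, -, -, -, rfl⟩
    exact Finset.sum_nonneg fun i _ => lempert_nonneg D (c i) (c (i + 1))
  · dsimp only
    split_ifs <;> assumption

lemma caratheodory_le {r : ℝ} (h : ∀ f : E → ℂ, DifferentiableOn ℂ f D → MapsTo f D (ball 0 1) →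
    f z = 0 → artanh ‖f w‖ ≤ r) : caratheodory D z w ≤ r := by
  refine csSup_le ⟨_, fun _ => 0, by fun_prop, fun _ _ => by simp, rfl, rfl⟩ ?_
  rintro _ ⟨f, hf, hfD, hfz, rfl⟩
  exact h f hf hfD hfz

lemma caratheodory_self_nonpos (D : Set E) (z : E) : caratheodory D z z ≤ 0 :=
  caratheodory_le fun f _ _ hfz => by simp [hfz, artanh]

lemma caratheodory_le_of_forall_dist_le (hz : z ∈ D) (hw : w ∈ D) {r : ℝ}
    (h : ∀ f : E → ℂ, DifferentiableOn ℂ f D → ∀ hf : ∀ y ∈ D, 0 < (f y).im,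
      dist (⟨f z, hf z hz⟩ : ℍ) ⟨f w, hf w hw⟩ / 2 ≤ r) : caratheodory D z w ≤ r := by
  refine caratheodory_le fun f hf hfD hfz => ?_
  have hlt : ∀ y ∈ D, ‖f y‖ < 1 := fun y hy => mem_ball_zero_iff.mp (hfD hy)
  have hdist := h (cayley ∘ f) (differentiableOn_cayley.comp hf hfD)
    fun y hy => im_cayley_pos (hlt y hy)
  simp only [Function.comp_apply, hfz] at hdist
  rwa [← tanh_half_dist_cayley (hlt w hw), artanh_tanh]

lemma artanh_norm_le_caratheodory (hD : DiscConnected D) (hz : z ∈ D) (hw : w ∈ D) {f : E → ℂ}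
    (hf : DifferentiableOn ℂ f D) (hfD : MapsTo f D (ball 0 1)) (hfz : f z = 0) :
    artanh ‖f w‖ ≤ caratheodory D z w := by
  obtain ⟨α, hα, hzw⟩ := hD z hz w hw
  refine le_csSup ⟨artanh ‖α‖, ?_⟩ ⟨f, hf, hfD, hfz, rfl⟩
  rintro _ ⟨g, hg, hgD, hgz, rfl⟩
  exact artanh_norm_le_of_joinedByDisc hzw hα hg hgD hgz

lemma half_dist_le_caratheodory (hD : DiscConnected D) (hz : z ∈ D) (hw : w ∈ D) {f : E → ℂ}
    (hf : DifferentiableOn ℂ f D) (hfD : ∀ y ∈ D, 0 < (f y).im) :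
    dist (⟨f z, hfD z hz⟩ : ℍ) ⟨f w, hfD w hw⟩ / 2 ≤ caratheodory D z w := by
  set g : E → ℂ := fun y => (f y - f z) / (f y - conj (f z))
  have hnorm : ∀ y, ∀ hy : y ∈ D,
      ‖g y‖ = Real.tanh (dist (⟨f z, hfD z hz⟩ : ℍ) ⟨f y, hfD y hy⟩ / 2) :=
    fun y hy => norm_sub_div_sub_conj ⟨f z, hfD z hz⟩ ⟨f y, hfD y hy⟩
  have hne : ∀ y ∈ D, f y - conj (f z) ≠ 0 := fun y hy h => by
    have him := congrArg Complex.im h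
    rw [Complex.sub_im, Complex.conj_im, Complex.zero_im] at him
    linarith [hfD y hy, hfD z hz]
  have hg : DifferentiableOn ℂ g D := differentiableOn_div (hf.sub_const _) (hf.sub_const _) hne
  have hgD : MapsTo g D (ball 0 1) := fun y hy => by
    rw [mem_ball_zero_iff, hnorm y hy]
    exact Real.tanh_lt_one _
  have h := artanh_norm_le_caratheodory hD hz hw hg hgD (by simp [g])
  rwa [hnorm w hw, artanh_tanh] at h

lemma abs_log_im_sub_log_im_le_caratheodory (hD : DiscConnected D) (hz : z ∈ D) (hw : w ∈ D)
    {f : E → ℂ} (hf : DifferentiableOn ℂ f D) (hfD : ∀ y ∈ D, 0 < (f y).im) :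
    |Real.log (f z).im - Real.log (f w).im| / 2 ≤ caratheodory D z w :=
  (div_le_div_of_nonneg_right (UpperHalfPlane.dist_log_im_le ⟨f z, hfD z hz⟩ ⟨f w, hfD w hw⟩)
    zero_le_two).trans (half_dist_le_caratheodory hD hz hw hf hfD)

lemma caratheodory_comm_le (hD : DiscConnected D) (hz : z ∈ D) (hw : w ∈ D) :
    caratheodory D z w ≤ caratheodory D w z :=
  caratheodory_le_of_forall_dist_le hz hw fun f hf hfD => by
    rw [dist_comm]
    exact half_dist_le_caratheodory hD hw hz hf hfD

lemma caratheodory_comm (hD : DiscConnected D) (hz : z ∈ D) (hw : w ∈ D) :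
    caratheodory D z w = caratheodory D w z :=
  (caratheodory_comm_le hD hz hw).antisymm (caratheodory_comm_le hD hw hz)

lemma caratheodory_triangle (hD : DiscConnected D) (hz : z ∈ D) (hx : x ∈ D) (hw : w ∈ D) :
    caratheodory D z w ≤ caratheodory D z x + caratheodory D x w :=
  caratheodory_le_of_forall_dist_le hz hw fun f hf hfD => by
    have htriangle := dist_triangle (⟨f z, hfD z hz⟩ : ℍ) ⟨f x, hfD x hx⟩ ⟨f w, hfD w hw⟩
    linarith [half_dist_le_caratheodory hD hz hx hf hfD,
      half_dist_le_caratheodory hD hx hw hf hfD]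

lemma caratheodory_le_lempert (hD : DiscConnected D) (hz : z ∈ D) (hw : w ∈ D) :
    caratheodory D z w ≤ lempert D z w := by
  obtain ⟨α, hα, hzw⟩ := hD z hz w hw
  refine le_csInf ⟨_, α, hα, hzw, rfl⟩ ?_
  rintro _ ⟨β, hβ, hzw, rfl⟩
  exact caratheodory_le fun f hf hfD hfz => artanh_norm_le_of_joinedByDisc hzw hβ hf hfD hfz

lemma caratheodory_le_sum_lempert (hD : DiscConnected D) {c : ℕ → E} {m : ℕ}
    (hc : ∀ i ≤ m, c i ∈ D) :
    caratheodory D (c 0) (c m) ≤ ∑ i ∈ Finset.range m, lempert D (c i) (c (i + 1)) := by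
  induction m with
  | zero => simpa using caratheodory_self_nonpos D (c 0)
  | succ m ih =>
    have hm : c m ∈ D := hc m m.le_succ
    have hm' : c (m + 1) ∈ D := hc (m + 1) le_rfl
    rw [Finset.sum_range_succ]
    linarith [ih fun i hi => hc i (hi.trans m.le_succ),
      caratheodory_triangle hD (hc 0 (Nat.zero_le _)) hm hm', caratheodory_le_lempert hD hm hm']

lemma caratheodory_le_kobayashi (hD : DiscConnected D) (hz : z ∈ D) (hw : w ∈ D) :
    caratheodory D z w ≤ kobayashi D z w := by
  refine le_csInf ⟨_, 1, fun i => if i = 0 then z else w, by simp, by simp, fun i _ => ?_, rfl⟩ ?_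
  · dsimp only
    split_ifs <;> assumption
  · rintro _ ⟨m, c, rfl, rfl, hc, rfl⟩
    exact caratheodory_le_sum_lempert hD hc

end InvariantFunctions

lemma not_gromovHyperbolicWith_of_squares {E : Type*} [NormedAddCommGroup E] [NormedSpace ℂ E]
    {D : Set E} {d : E → E → ℝ} (κ : ℝ)
    (h : ∀ L ≥ 0, ∃ p ∈ D, ∃ q ∈ D, ∃ x ∈ D, ∃ w ∈ D,
      (d p x ≤ L ∧ d x q ≤ L ∧ d p w ≤ L ∧ d w q ≤ L) ∧
      2 * L - κ ≤ d p q ∧ 2 * L - κ ≤ d x w ∧ 2 * L - κ ≤ d w x) :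
    ¬ GromovHyperbolicWith D d := by
  rintro ⟨C, hC⟩
  obtain ⟨p, hp, q, hq, x, hx, w, hw, ⟨hpx, hxq, hpw, hwq⟩, hpq, hxw, hwx⟩ :=
    h (|C| + |κ| + 1) (by positivity)
  have hmin := hC p hp q hq x hx w hw
  rw [sub_le_iff_le_add, min_le_iff] at hmin
  have hCabs := le_abs_self C
  have hκabs := le_abs_self κ
  have := abs_nonneg C
  rcases hmin with hmin | hmin <;> linarith

section SymmetrizedPolydisc

open Polynomial

variable {n : ℕ}

/-- The symmetrization map `π : ℂⁿ → ℂⁿ`. As in `symmetrizedPolydisc`, the component with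
index `k : Fin n` is the elementary symmetric polynomial of degree `k + 1`. -/
noncomputable def symmetrization (z : Fin n → ℂ) : EuclideanSpace ℂ (Fin n) :=
  WithLp.toLp 2 fun k => ∑ s ∈ Finset.univ.powersetCard ((k : ℕ) + 1), ∏ j ∈ s, z j

lemma symmetrizedPolydisc_eq_image :
    symmetrizedPolydisc n = symmetrization '' ball (0 : Fin n → ℂ) 1 := by
  ext w
  simp only [mem_image, mem_ball_zero_iff, pi_norm_lt_iff one_pos]
  refine exists_congr fun z => and_congr_right fun _ => ⟨fun h => ?_, ?_⟩
  · ext k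
    exact (h k).symm
  · rintro rfl k
    rfl

lemma symmetrization_mem {z : Fin n → ℂ} (hz : ‖z‖ < 1) :
    symmetrization z ∈ symmetrizedPolydisc n :=
  symmetrizedPolydisc_eq_image ▸ mem_image_of_mem _ (mem_ball_zero_iff.mpr hz)

lemma differentiable_symmetrization : Differentiable ℂ (symmetrization (n := n)) := by
  refine differentiable_euclidean.mpr fun k => ?_
  simp only [symmetrization]
  fun_prop

lemma discConnected_symmetrizedPolydisc : DiscConnected (symmetrizedPolydisc n) := by
  rw [symmetrizedPolydisc_eq_image]
  exact discConnected_polydisc.image differentiable_symmetrization.differentiableOn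

lemma lempert_symmetrization_le {z w : Fin n → ℂ} (hz : ‖z‖ < 1) (hw : ‖w‖ < 1) :
    lempert (symmetrizedPolydisc n) (symmetrization z) (symmetrization w) ≤
      artanh ‖fun j => mobius (-z j) (w j)‖ := by
  have hdisc := (joinedByDisc_polydisc hz hw).map (D' := symmetrizedPolydisc n)
    differentiable_symmetrization.differentiableOn
    fun ζ hζ => symmetrization_mem (mem_ball_zero_iff.mp hζ)
  simpa using lempert_le_of_joinedByDisc hdisc (by simpa using norm_mobius_neg_pi_lt_one hz hw)

/-- The monic polynomial whose roots are `z₁, …, zₙ` when `w = π(z)`, with the signed components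
of `w` as its coefficients. -/
noncomputable def rootPolynomial (w : EuclideanSpace ℂ (Fin n)) : ℂ[X] :=
  X ^ n + ∑ k : Fin n, (-1) ^ ((k : ℕ) + 1) * (C (w k) * X ^ (n - ((k : ℕ) + 1)))

lemma rootPolynomial_symmetrization (z : Fin n → ℂ) :
    rootPolynomial (symmetrization z) = ((Finset.univ.val.map z).map fun a => X - C a).prod := by
  rw [Multiset.prod_X_sub_X_eq_sum_esymm, Multiset.card_map, Finset.card_val, Finset.card_univ,
    Fintype.card_fin, Finset.sum_range_succ', add_comm, Finset.sum_range]
  simp only [rootPolynomial, symmetrization, Finset.esymm_map_val, Finset.powersetCard_zero,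
    Finset.sum_singleton, Finset.prod_empty, map_one, pow_zero, one_mul, Nat.sub_zero]

/-- The function `π(z) ↦ i ∑ⱼ (u + zⱼ) / (u - zⱼ)`, written in terms of the logarithmic derivative
of the root polynomial at `u`. For `|u| = 1` it maps `𝔾ₙ` to the upper half plane. -/
noncomputable def herglotzSum (u : ℂ) (w : EuclideanSpace ℂ (Fin n)) : ℂ :=
  Complex.I * (2 * u * ((derivative (rootPolynomial w)).eval u / (rootPolynomial w).eval u) - n)

lemma eval_rootPolynomial_symmetrization_ne_zero {u : ℂ} (hu : ‖u‖ = 1) {z : Fin n → ℂ}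
    (hz : ‖z‖ < 1) : (rootPolynomial (symmetrization z)).eval u ≠ 0 := by
  rw [rootPolynomial_symmetrization, Multiset.map_map, eval_multiset_prod, Multiset.map_map]
  refine Finset.prod_ne_zero_iff.mpr fun j _ => ?_
  simpa using sub_ne_zero_of_norm_lt (hu ▸ (norm_le_pi_norm z j).trans_lt hz)

lemma herglotzSum_symmetrization {u : ℂ} (hu : ‖u‖ = 1) {z : Fin n → ℂ} (hz : ‖z‖ < 1) :
    herglotzSum u (symmetrization z) = Complex.I * ∑ j, herglotzRieszKernel 0 (z j) u := by
  have hsub : ∀ j, u - z j ≠ 0 := fun j =>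
    sub_ne_zero_of_norm_lt (hu ▸ (norm_le_pi_norm z j).trans_lt hz)
  have hlogDeriv : (derivative (rootPolynomial (symmetrization z))).eval u /
      (rootPolynomial (symmetrization z)).eval u = ∑ j, 1 / (u - z j) := by
    rw [(IsAlgClosed.splits _).eval_derivative_div_eval_of_ne_zero
      (eval_rootPolynomial_symmetrization_ne_zero hu hz), rootPolynomial_symmetrization,
      roots_multiset_prod_X_sub_C, Multiset.map_map]
    rfl
  have hcard : (n : ℂ) = ∑ _j : Fin n, 1 := by simp
  rw [herglotzSum, hlogDeriv, hcard, Finset.mul_sum, ← Finset.sum_sub_distrib]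
  refine congrArg _ (Finset.sum_congr rfl fun j _ => ?_)
  have := hsub j
  rw [herglotzRieszKernel_def, sub_zero, sub_zero]
  field_simp
  ring

lemma im_herglotzSum_symmetrization {u : ℂ} (hu : ‖u‖ = 1) {z : Fin n → ℂ} (hz : ‖z‖ < 1) :
    (herglotzSum u (symmetrization z)).im = ∑ j, (herglotzRieszKernel 0 (z j) u).re := by
  rw [herglotzSum_symmetrization hu hz, Complex.I_mul_im, Complex.re_sum]

lemma differentiableOn_herglotzSum {u : ℂ} (hu : ‖u‖ = 1) :
    DifferentiableOn ℂ (herglotzSum u) (symmetrizedPolydisc n) := by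
  have heval : Differentiable ℂ fun w : EuclideanSpace ℂ (Fin n) => (rootPolynomial w).eval u := by
    simp only [rootPolynomial, eval_add, eval_finsetSum, eval_mul, eval_pow, eval_neg, eval_one,
      eval_C, eval_X]
    fun_prop
  have hderiv : Differentiable ℂ fun w : EuclideanSpace ℂ (Fin n) =>
      (derivative (rootPolynomial w)).eval u := by
    simp only [rootPolynomial, derivative_add, derivative_sum, derivative_mul, derivative_C,
      derivative_pow, zero_mul, zero_add, eval_add, eval_finsetSum, eval_mul, eval_C]
    fun_prop
  unfold herglotzSum
  refine (((differentiableOn_div hderiv.differentiableOn heval.differentiableOn ?_).const_mul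
    _).sub_const _).const_mul _
  rw [symmetrizedPolydisc_eq_image]
  rintro _ ⟨z, hz, rfl⟩
  exact eval_rootPolynomial_symmetrization_ne_zero hu (mem_ball_zero_iff.mp hz)

lemma im_herglotzSum_pos [NeZero n] {u : ℂ} (hu : ‖u‖ = 1) {w : EuclideanSpace ℂ (Fin n)}
    (hw : w ∈ symmetrizedPolydisc n) : 0 < (herglotzSum u w).im := by
  rw [symmetrizedPolydisc_eq_image] at hw
  obtain ⟨z, hz, rfl⟩ := hw
  rw [mem_ball_zero_iff] at hz
  rw [im_herglotzSum_symmetrization hu hz]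
  exact Finset.sum_pos (fun j _ => re_herglotzRieszKernel_pos
    (hu ▸ (norm_le_pi_norm z j).trans_lt hz)) Finset.univ_nonempty


/-- The point `π (tanh s₁, …, tanh sₙ)` of `𝔾ₙ`. -/
noncomputable def hyperbolicPoint (s : Fin n → ℝ) : EuclideanSpace ℂ (Fin n) :=
  symmetrization fun j => (Real.tanh (s j) : ℂ)

lemma hyperbolicPoint_mem (s : Fin n → ℝ) : hyperbolicPoint s ∈ symmetrizedPolydisc n :=
  symmetrization_mem (norm_ofReal_tanh_lt_one s)

lemma lempert_hyperbolicPoint_le (s t : Fin n → ℝ) :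
    lempert (symmetrizedPolydisc n) (hyperbolicPoint s) (hyperbolicPoint t) ≤ dist s t := by
  refine (lempert_symmetrization_le (norm_ofReal_tanh_lt_one s)
    (norm_ofReal_tanh_lt_one t)).trans ?_
  simp only [mobius_neg_tanh]
  have hnorm : ‖fun j => ((Real.tanh (t j - s j) : ℝ) : ℂ)‖ ≤ Real.tanh (dist s t) := by
    refine (pi_norm_le_iff_of_nonneg ((abs_nonneg _).trans <|
      abs_tanh_le_tanh_of_abs_le (abs_of_nonneg dist_nonneg).le)).mpr fun j => ?_
    rw [Complex.norm_real]
    refine abs_tanh_le_tanh_of_abs_le ?_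
    rw [← Real.dist_eq, dist_comm]
    exact dist_le_pi_dist s t j
  exact (artanh_le_artanh (by linarith [norm_nonneg fun j => ((Real.tanh (t j - s j) : ℝ) : ℂ)])
    (Real.tanh_lt_one _) hnorm).trans_eq (artanh_tanh _)

lemma herglotzRieszKernel_tanh (u : ℤˣ) (x : ℝ) :
    herglotzRieszKernel 0 (Real.tanh x : ℂ) (u : ℤ) = (Real.exp (2 * ((u : ℤ) * x)) : ℝ) := by
  rw [← one_add_tanh_div_one_sub_tanh, herglotzRieszKernel_def]
  rcases Int.units_eq_one_or u with rfl | rfl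
  · simp
  · rw [← neg_div_neg_eq]
    simp [add_comm]

lemma im_herglotzSum_hyperbolicPoint (u : ℤˣ) (s : Fin n → ℝ) :
    (herglotzSum (u : ℤ) (hyperbolicPoint s)).im = ∑ j, Real.exp (2 * ((u : ℤ) * s j)) := by
  rw [hyperbolicPoint,
    im_herglotzSum_symmetrization (norm_intCast_unit u) (norm_ofReal_tanh_lt_one s)]
  simp only [herglotzRieszKernel_tanh, Complex.ofReal_re]

lemma sub_le_caratheodory_hyperbolicPoint (u : ℤˣ) {s : Fin n → ℝ} {M : ℝ}
    (hs : ∀ j, (u : ℤ) * s j ≤ M) (t : Fin n → ℝ) (i : Fin n) :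
    (u : ℤ) * t i - M - Real.log n / 2 ≤
      caratheodory (symmetrizedPolydisc n) (hyperbolicPoint s) (hyperbolicPoint t) := by
  have : NeZero n := ⟨i.pos.ne'⟩
  have hlog := abs_log_im_sub_log_im_le_caratheodory discConnected_symmetrizedPolydisc
    (hyperbolicPoint_mem s) (hyperbolicPoint_mem t)
    (differentiableOn_herglotzSum (norm_intCast_unit u))
    fun _ => im_herglotzSum_pos (norm_intCast_unit u)
  rw [im_herglotzSum_hyperbolicPoint, im_herglotzSum_hyperbolicPoint, abs_sub_comm] at hlog
  have hupper := log_sum_exp_le_add_log_card (x := fun j => 2 * ((u : ℤ) * s j)) (M := 2 * M)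
    fun j => by linarith [hs j]
  rw [Fintype.card_fin] at hupper
  have hlower := le_log_sum_exp (fun j => 2 * ((u : ℤ) * t j)) i
  have habs := le_abs_self (Real.log (∑ j, Real.exp (2 * ((u : ℤ) * t j))) -
    Real.log (∑ j, Real.exp (2 * ((u : ℤ) * s j))))
  linarith

/-- The point of `𝔾ₙ` with one hyperbolic coordinate `a` and all others `b`. For `b ≤ a` the pair
`(a, b)` is its maximum and minimum. -/
noncomputable def maxMinPoint (i : Fin n) (a b : ℝ) : EuclideanSpace ℂ (Fin n) :=
  hyperbolicPoint (Function.update (fun _ => b) i a)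

lemma maxMinPoint_mem (i : Fin n) (a b : ℝ) : maxMinPoint i a b ∈ symmetrizedPolydisc n :=
  hyperbolicPoint_mem _

lemma lempert_maxMinPoint_le {i : Fin n} {a b a' b' r : ℝ} (ha : |a - a'| ≤ r) (hb : |b - b'| ≤ r) :
    lempert (symmetrizedPolydisc n) (maxMinPoint i a b) (maxMinPoint i a' b') ≤ r :=
  (lempert_hyperbolicPoint_le _ _).trans
    (dist_update_const_le (by rwa [Real.dist_eq]) (by rwa [Real.dist_eq]))

lemma max_sub_le_caratheodory_maxMinPoint (i : Fin n) {a b : ℝ} (hab : b ≤ a) (a' b' : ℝ) :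
    a' - a - Real.log n / 2 ≤
      caratheodory (symmetrizedPolydisc n) (maxMinPoint i a b) (maxMinPoint i a' b') := by
  have hmax : ∀ k, Function.update (fun _ => b) i a k ≤ a := fun k => by
    rcases eq_or_ne k i with rfl | hk
    · simp
    · simpa [hk] using hab
  simpa [maxMinPoint] using sub_le_caratheodory_hyperbolicPoint 1
    (by simpa using hmax) (Function.update (fun _ => b') i a') i

lemma min_sub_le_caratheodory_maxMinPoint {i j : Fin n} (hij : j ≠ i) {a b : ℝ} (hab : b ≤ a)
    (a' b' : ℝ) : b - b' - Real.log n / 2 ≤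
      caratheodory (symmetrizedPolydisc n) (maxMinPoint i a b) (maxMinPoint i a' b') := by
  have hmin : ∀ k, b ≤ Function.update (fun _ => b) i a k := fun k => by
    rcases eq_or_ne k i with rfl | hk
    · simpa using hab
    · simp [hk]
  calc b - b' - Real.log n / 2
      = ((-1 : ℤˣ) : ℤ) * Function.update (fun _ => b') i a' j - -b - Real.log n / 2 := by
        rw [Function.update_of_ne hij]
        push_cast
        ring
    _ ≤ caratheodory (symmetrizedPolydisc n) (maxMinPoint i a b) (maxMinPoint i a' b') :=
        sub_le_caratheodory_hyperbolicPoint (-1) (by simpa using hmin) _ j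

theorem symmetrizedPolydisc_not_gromov_hyperbolic_general (hn : 2 ≤ n)
    {d : EuclideanSpace ℂ (Fin n) → EuclideanSpace ℂ (Fin n) → ℝ}
    (hcd : ∀ z ∈ symmetrizedPolydisc n, ∀ w ∈ symmetrizedPolydisc n,
      caratheodory (symmetrizedPolydisc n) z w ≤ d z w)
    (hdl : ∀ z ∈ symmetrizedPolydisc n, ∀ w ∈ symmetrizedPolydisc n,
      d z w ≤ lempert (symmetrizedPolydisc n) z w) :
    ¬ GromovHyperbolicWith (symmetrizedPolydisc n) d := by
  have : Nontrivial (Fin n) := Fin.nontrivial_iff_two_le.mpr hn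
  obtain ⟨i, j, hij⟩ := exists_pair_ne (Fin n)
  set P : ℝ → ℝ → EuclideanSpace ℂ (Fin n) := maxMinPoint i
  have hP : ∀ a b, P a b ∈ symmetrizedPolydisc n := maxMinPoint_mem i
  have hside : ∀ {a b a' b' r : ℝ}, |a - a'| ≤ r → |b - b'| ≤ r → d (P a b) (P a' b') ≤ r :=
    fun ha hb => (hdl _ (hP _ _) _ (hP _ _)).trans (lempert_maxMinPoint_le ha hb)
  -- The square consists of `c ± L e₁` and `c ± L e₂` in the `(max, min)`-plane, with `c = (L, -L)`.
  refine not_gromovHyperbolicWith_of_squares (Real.log n / 2) fun L hL => ?_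
  have hmax := max_sub_le_caratheodory_maxMinPoint i (neg_nonpos.mpr hL) (2 * L) (-L)
  have hmin := min_sub_le_caratheodory_maxMinPoint hij.symm hL L (-(2 * L))
  have hmin' := hmin
  rw [caratheodory_comm discConnected_symmetrizedPolydisc (hP _ _) (hP _ _)] at hmin'
  have hpq := hcd _ (hP 0 (-L)) _ (hP (2 * L) (-L))
  have hxw := hcd _ (hP L (-(2 * L))) _ (hP L 0)
  have hwx := hcd _ (hP L 0) _ (hP L (-(2 * L)))
  exact ⟨_, hP 0 (-L), _, hP (2 * L) (-L), _, hP L (-(2 * L)), _, hP L 0,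
    ⟨hside (by grind) (by grind), hside (by grind) (by grind), hside (by grind) (by grind),
      hside (by grind) (by grind)⟩, by linarith, by linarith, by linarith⟩

end SymmetrizedPolydisc

/-- **Proposition 3.** For `n ≥ 2` the symmetrized polydisc `𝔾ₙ` is not Gromov
hyperbolic with respect to the Carathéodory distance, nor with respect to the
Kobayashi distance. -/
theorem symmetrizedPolydisc_not_gromov_hyperbolic (n : ℕ) (hn : 2 ≤ n) :
    ¬ GromovHyperbolicWith (symmetrizedPolydisc n) (caratheodory (symmetrizedPolydisc n)) ∧
      ¬ GromovHyperbolicWith (symmetrizedPolydisc n) (kobayashi (symmetrizedPolydisc n)) := by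
  have hD := discConnected_symmetrizedPolydisc (n := n)
  exact ⟨symmetrizedPolydisc_not_gromov_hyperbolic_general hn (fun _ _ _ _ => le_rfl)
      fun _ hz _ hw => caratheodory_le_lempert hD hz hw,
    symmetrizedPolydisc_not_gromov_hyperbolic_general hn
      (fun _ hz _ hw => caratheodory_le_kobayashi hD hz hw)
      fun _ hz _ hw => kobayashi_le_lempert hz hw⟩
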